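/- Let Ω ⊂ ℝⁿ be a bounded open set, T > 0, g : (ℝⁿ ∖ Ω) × [0,T] → ℝ and u₀ : Ω → ℝ. Suppose ṽ : ℝⁿ × [0,T] → ℝ is bounded and continuous, continuously differentiable in t, with ṽ(·,t) ∈ C²(ℝⁿ) having first and second derivatives bounded uniformly in t and α-Hölder second derivatives with a constant H uniform in t, and that ṽ satisfies ∂ₜṽ(x,t) = 𝒦ṽ(x,t) := Σ_{i,j=1}^{n} a_{ij}(x) ∂ᵢ∂ⱼṽ(x,t) + Σ_{i=1}^{n} bᵢ(x) ∂ᵢṽ(x,t) for x ∈ Ω and t ∈ (0,T], ṽ(x,t) = g(x,t) for x ∉ Ω, and ṽ(x,0) = u₀(x) for x ∈ Ω. For each 0 < ε ≤ 1 let u^ε : ℝⁿ × [0,T] → ℝ be bounded, continuous on cl(Ω) × [0,T], differentiable in t on (0,T] for each x ∈ Ω, and satisfy ∂ₜu^ε(x,t) = 𝒦_ε u^ε(·,t)(x) for x ∈ Ω and t ∈ (0,T], u^ε(x,t) = g(x,t) for x ∉ Ω, and u^ε(x,0) = u₀(x) for x ∈ Ω. Then there exists a constant c, independent of ε, such that sup_{(x,t)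 ∈ Ω × [0,T]} |u^ε(x,t) − ṽ(x,t)| ≤ c ε^α for all 0 < ε ≤ 1. (This is the abelian instance of the paper's Theorem 1.1.) -/

import Mathlib

open MeasureTheory Matrix Set

/-- First partial derivative `∂ᵢ f (x)`. -/
noncomputable def pd1 {n : ℕ} (f : EuclideanSpace ℝ (Fin n) → ℝ)
    (x : EuclideanSpace ℝ (Fin n)) (i : Fin n) : ℝ :=
  fderiv ℝ f x (EuclideanSpace.single i 1)

/-- Second partial derivative `∂ᵢ∂ⱼ f (x)`. -/
noncomputable def pd2 {n : ℕ} (f : EuclideanSpace ℝ (Fin n) → ℝ)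
    (x : EuclideanSpace ℝ (Fin n)) (i j : Fin n) : ℝ :=
  fderiv ℝ (fderiv ℝ f) x (EuclideanSpace.single i 1) (EuclideanSpace.single j 1)

/-- The Laplacian `Δf(x) = ∑ᵢ ∂ᵢ∂ᵢ f(x)`. -/
noncomputable def lap {n : ℕ} (f : EuclideanSpace ℝ (Fin n) → ℝ)
    (x : EuclideanSpace ℝ (Fin n)) : ℝ :=
  ∑ i, pd2 f x i i

/-- Matrix acting on a Euclidean vector. -/
noncomputable def mvec {n : ℕ} (A : Matrix (Fin n) (Fin n) ℝ)
    (x : EuclideanSpace ℝ (Fin n)) : EuclideanSpace ℝ (Fin n) :=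
  Matrix.toEuclideanLin A x

/-- The affine function `ã(w) = w₁ + ⋯ + w_n + M`. -/
noncomputable def atil {n : ℕ} (M : ℝ) (w : EuclideanSpace ℝ (Fin n)) : ℝ :=
  (∑ i, w i) + M

/-- The matrix `E(x) = (M/2) W(x) A(x)⁻¹` with `W(x) = diag(b(x))`. -/
noncomputable def Emat {n : ℕ} (M : ℝ) (A : EuclideanSpace ℝ (Fin n) → Matrix (Fin n) (Fin n) ℝ)
    (b : EuclideanSpace ℝ (Fin n) → Fin n → ℝ) (x : EuclideanSpace ℝ (Fin n)) :
    Matrix (Fin n) (Fin n) ℝ :=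
  (M / 2) • (Matrix.diagonal (b x) * (A x)⁻¹)

/-- The rescaled kernel
`K_ε(x,y) = (c(x)/ε^{n+2}) ã(−E(x)(x−y)) J(L(x)⁻¹(x−y)/ε)`,
where `c(x) = 2/(C(J) M det(A(x))^{1/2})`. -/
noncomputable def Kker {n : ℕ} (J : EuclideanSpace ℝ (Fin n) → ℝ) (CJ M : ℝ)
    (A L : EuclideanSpace ℝ (Fin n) → Matrix (Fin n) (Fin n) ℝ)
    (b : EuclideanSpace ℝ (Fin n) → Fin n → ℝ)
    (ε : ℝ) (x y : EuclideanSpace ℝ (Fin n)) : ℝ :=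
  2 / (CJ * M * Real.sqrt (A x).det) / ε ^ (n + 2) *
    atil M (-(mvec (Emat M A b x) (x - y))) *
    J (ε⁻¹ • mvec (L x)⁻¹ (x - y))

/-- The rescaled nonlocal operator `𝒦_ε u(x) = ∫ K_ε(x,y)(u(y) − u(x)) dy`. -/
noncomputable def Kop {n : ℕ} (J : EuclideanSpace ℝ (Fin n) → ℝ) (CJ M : ℝ)
    (A L : EuclideanSpace ℝ (Fin n) → Matrix (Fin n) (Fin n) ℝ)
    (b : EuclideanSpace ℝ (Fin n) → Fin n → ℝ)
    (ε : ℝ) (u : EuclideanSpace ℝ (Fin n) → ℝ) (x : EuclideanSpace ℝ (Fin n)) : ℝ :=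
  ∫ y, Kker J CJ M A L b ε x y * (u y - u x)

/-- The local operator `𝒦u(x) = ∑ᵢⱼ aᵢⱼ(x)∂ᵢ∂ⱼu(x) + ∑ᵢ bᵢ(x)∂ᵢu(x)`. -/
noncomputable def Kloc {n : ℕ} (A : EuclideanSpace ℝ (Fin n) → Matrix (Fin n) (Fin n) ℝ)
    (b : EuclideanSpace ℝ (Fin n) → Fin n → ℝ)
    (u : EuclideanSpace ℝ (Fin n) → ℝ) (x : EuclideanSpace ℝ (Fin n)) : ℝ :=
  (∑ i, ∑ j, A x i j * pd2 u x i j) + ∑ i, b x i * pd1 u x i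



abbrev EE (n : ℕ) := EuclideanSpace ℝ (Fin n)

theorem aux_int {n : ℕ} {J : EE n → ℝ} (hJint : Integrable J)
    (hJcs : HasCompactSupport J) {f : EE n → ℝ} (hf : Continuous f) :
    Integrable (fun z => J z * f z) := by
  have h := hJint.integrableOn (s := tsupport J)
  have h2 := h.mul_continuousOn hf.continuousOn hJcs
  refine (integrableOn_iff_integrable_of_support_subset ?_).1 h2
  intro z hz
  apply subset_tsupport
  intro h0
  exact hz (by simp [h0])

theorem aux_odd {n : ℕ} {F : EE n → ℝ} (hF : ∀ z, F (-z) = - F z) : ∫ z, F z = 0 := by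
  have h := integral_neg_eq_self F volume
  simp only [hF, integral_neg] at h
  linarith

theorem aux_mom {n : ℕ} {J : EE n → ℝ} (hJint : Integrable J)
    (hJcs : HasCompactSupport J) {CJ : ℝ}
    (hJmom : ∀ i j : Fin n, ∫ x, J x * (x i * x j) = if i = j then CJ else 0)
    (P Q : Matrix (Fin n) (Fin n) ℝ) (i j : Fin n) :
    ∫ z, J z * (mvec P z i * mvec Q z j) = CJ * (P * Qᵀ) i j := by
  have e : ∀ z : EE n, J z * (mvec P z i * mvec Q z j)
      = ∑ k, ∑ l, (P i k * Q j l) * (J z * (z k * z l)) := by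
    intro z
    simp only [mvec, Matrix.toLpLin_apply, Matrix.mulVec, dotProduct]
    rw [Finset.sum_mul_sum, Finset.mul_sum]
    refine Finset.sum_congr rfl fun k _ => ?_
    rw [Finset.mul_sum]
    refine Finset.sum_congr rfl fun l _ => ?_
    ring
  have hi : ∀ k l : Fin n, Integrable (fun z : EE n => (P i k * Q j l) * (J z * (z k * z l))) :=
    fun k l => (aux_int hJint hJcs (by fun_prop)).const_mul _
  simp only [e]
  rw [integral_finsetSum _ fun k _ => integrable_finsetSum _ fun l _ => hi k l]
  simp_rw [fun k => integral_finsetSum _ fun l (_ : l ∈ Finset.univ) => hi k l, integral_const_mul,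
    hJmom]
  simp [Matrix.mul_apply, Finset.mul_sum, mul_comm]

theorem aux_taylor {n : ℕ} {f : EE n → ℝ} (hf : ContDiff ℝ 2 f) {α H : ℝ} (hα : 0 < α) (hH : 0 ≤ H)
    (hHol : ∀ x y, ∀ i j : Fin n, |pd2 f x i j - pd2 f y i j| ≤ H * ‖x - y‖ ^ α) (x h : EE n) :
    |f (x + h) - f x - fderiv ℝ f x h - 1/2 * fderiv ℝ (fderiv ℝ f) x h h|
      ≤ n ^ 2 * H * (‖h‖ ^ 2 * ‖h‖ ^ α) := by
  set B := n ^ 2 * H * (‖h‖ ^ 2 * ‖h‖ ^ α) with hB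
  have hB0 : 0 ≤ B := by positivity
  have hf1 : ContDiff ℝ 1 (fderiv ℝ f) := hf.fderiv_right (by norm_num)
  have hd1 : ∀ y, HasFDerivAt f (fderiv ℝ f y) y := fun y =>
    (hf.differentiable (by norm_num) y).hasFDerivAt
  have hd2 : ∀ y, HasFDerivAt (fderiv ℝ f) (fderiv ℝ (fderiv ℝ f) y) y := fun y =>
    (hf1.differentiable (by norm_num) y).hasFDerivAt
  have hline : ∀ s : ℝ, HasDerivAt (fun s : ℝ => x + s • h) h s := fun s => by
    simpa using ((hasDerivAt_id s).smul_const h).const_add x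
  have hexp : ∀ y, fderiv ℝ (fderiv ℝ f) y h h = ∑ i, ∑ j, h i * h j * pd2 f y i j := by
    intro y
    have hh : h = ∑ i, h i • EuclideanSpace.single i (1:ℝ) := by
      ext k; simp [Finset.sum_apply, Pi.single_apply]
    conv_lhs => rw [hh]
    simp [pd2, Finset.mul_sum, mul_assoc]
    rw [Finset.sum_comm]
    refine Finset.sum_congr rfl fun i _ => Finset.sum_congr rfl fun j _ => ?_
    ring
  have hdiff : ∀ s ∈ Icc (0:ℝ) 1, |fderiv ℝ (fderiv ℝ f) (x + s • h) h h
      - fderiv ℝ (fderiv ℝ f) x h h| ≤ B := by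
    intro s hs
    rw [hexp, hexp, ← Finset.sum_sub_distrib]
    have hc : ∀ i, |h i| ≤ ‖h‖ := fun i => by simpa using PiLp.norm_apply_le h i
    have hsn : ‖x + s • h - x‖ ^ α ≤ ‖h‖ ^ α := by
      apply Real.rpow_le_rpow (norm_nonneg _) _ hα.le
      rw [add_sub_cancel_left, norm_smul, Real.norm_eq_abs, abs_of_nonneg hs.1]
      exact mul_le_of_le_one_left (norm_nonneg _) hs.2
    calc _ ≤ ∑ i : Fin n, ∑ j : Fin n, ‖h‖ * ‖h‖ * (H * ‖h‖ ^ α) := by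
            refine (Finset.abs_sum_le_sum_abs _ _).trans (Finset.sum_le_sum fun i _ => ?_)
            rw [← Finset.sum_sub_distrib]
            refine (Finset.abs_sum_le_sum_abs _ _).trans (Finset.sum_le_sum fun j _ => ?_)
            rw [← mul_sub, abs_mul, abs_mul]
            have := (hHol (x + s • h) x i j).trans (mul_le_mul_of_nonneg_left hsn hH)
            gcongr
            · exact hc i
            · exact hc j
      _ = B := by simp [hB]; ring
  have hd1' : ∀ s : ℝ, HasDerivAt (fun s : ℝ => f (x + s • h)) (fderiv ℝ f (x + s • h) h) s :=
    fun s => (hd1 _).comp_hasDerivAt s (hline s)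
  have hd2' : ∀ s : ℝ, HasDerivAt (fun s : ℝ => fderiv ℝ f (x + s • h) h)
      (fderiv ℝ (fderiv ℝ f) (x + s • h) h h) s := fun s => by
    have := (hd2 _).comp_hasDerivAt s (hline s)
    simpa using this.clm_apply (hasDerivAt_const s h)
  have hψ1 : ∀ s ∈ Icc (0:ℝ) 1, |fderiv ℝ f (x + s • h) h - fderiv ℝ f x h
      - s * fderiv ℝ (fderiv ℝ f) x h h| ≤ B := by
    intro s hs
    have := norm_image_sub_le_of_norm_deriv_le_segment'
      (f := fun s : ℝ => fderiv ℝ f (x + s • h) h - s * fderiv ℝ (fderiv ℝ f) x h h)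
      (f' := fun s => fderiv ℝ (fderiv ℝ f) (x + s • h) h h - fderiv ℝ (fderiv ℝ f) x h h)
      (C := B) (a := 0) (b := 1)
      (fun s hs => by
        have := (hd2' s).sub ((hasDerivAt_id s).mul_const (fderiv ℝ (fderiv ℝ f) x h h))
        have h2 := this.hasDerivWithinAt (s := Icc 0 1)
        rw [one_mul] at h2
        exact h2)
      (fun s hs => by simpa using hdiff s ⟨hs.1, hs.2.le⟩) s hs
    simp only [zero_smul, add_zero, zero_mul, sub_zero, Real.norm_eq_abs] at this
    rw [show fderiv ℝ f (x + s • h) h - fderiv ℝ f x h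
      - s * fderiv ℝ (fderiv ℝ f) x h h = fderiv ℝ f (x + s • h) h
      - s * fderiv ℝ (fderiv ℝ f) x h h - fderiv ℝ f x h by ring]
    exact this.trans (mul_le_of_le_one_right hB0 hs.2)
  have := norm_image_sub_le_of_norm_deriv_le_segment_01'
      (f := fun s : ℝ => f (x + s • h) - s * fderiv ℝ f x h
        - s ^ 2 / 2 * fderiv ℝ (fderiv ℝ f) x h h)
      (f' := fun s => fderiv ℝ f (x + s • h) h - fderiv ℝ f x h
      - s * fderiv ℝ (fderiv ℝ f) x h h) (C := B)
      (fun s hs => by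
        have := ((hd1' s).sub ((hasDerivAt_id s).mul_const (fderiv ℝ f x h))).sub
          ((((hasDerivAt_id s).pow 2).div_const 2).mul_const (fderiv ℝ (fderiv ℝ f) x h h))
        have h2 := this.hasDerivWithinAt (s := Icc 0 1)
        refine h2.congr_deriv ?_
        simp)
      (fun s hs => by simpa using hψ1 s ⟨hs.1, hs.2.le⟩)
  simp only [Real.norm_eq_abs] at this
  convert this using 2
  simp
  ring

theorem mvec_continuous {n : ℕ} (P : Matrix (Fin n) (Fin n) ℝ) : Continuous (mvec P) :=
  (Matrix.toEuclideanLin P).continuous_of_finiteDimensional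

theorem mvec_mul {n : ℕ} (P Q : Matrix (Fin n) (Fin n) ℝ) (z : EE n) :
    mvec (P * Q) z = mvec P (mvec Q z) := by
  ext i; simp [mvec, Matrix.toLpLin_apply, Matrix.mulVec_mulVec]

theorem aux_cov {n : ℕ} (P : Matrix (Fin n) (Fin n) ℝ) (hP : 0 < P.det) {ε : ℝ} (hε : 0 < ε)
    (x : EE n) (F : EE n → ℝ) :
    ∫ y, F y = (ε ^ n * P.det) * ∫ z, F (x - ε • mvec P z) := by
  set φ : EE n →ₗ[ℝ] EE n := ε • Matrix.toEuclideanLin P with hφ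
  have hdet : LinearMap.det φ = ε ^ n * P.det := by
    rw [hφ, LinearMap.det_smul]
    simp [Matrix.toEuclideanLin_eq_toLin_orthonormal]
  have hpos : 0 < ε ^ n * P.det := by positivity
  have hne : LinearMap.det φ ≠ 0 := by rw [hdet]; exact hpos.ne'
  have hemb : MeasurableEmbedding φ :=
    ((LinearEquiv.ofIsUnitDet (v := Module.finBasis ℝ (EE n)) (v' := Module.finBasis ℝ (EE n)) (f := φ)
      (by rw [LinearMap.det_toMatrix]; exact hne.isUnit)).toContinuousLinearEquiv.toHomeomorph).measurableEmbedding
  have h1 := hemb.integral_map (μ := volume) (fun y => F (x - y))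
  rw [Measure.map_linearMap_addHaar_eq_smul_addHaar _ hne, integral_smul_measure, 
    integral_sub_left_eq_self, hdet, ENNReal.toReal_ofReal (abs_nonneg _),
    abs_of_pos (inv_pos.2 hpos), smul_eq_mul] at h1
  have h2 : ∫ z, F (x - ε • mvec P z) = (ε ^ n * P.det)⁻¹ * ∫ y, F y := h1.symm
  rw [h2, mul_inv_cancel_left₀ hpos.ne']

theorem det_pos_of_tri {n : ℕ} (L : Matrix (Fin n) (Fin n) ℝ)
    (hLtri : ∀ i j : Fin n, i < j → L i j = 0)
    (hLdiag : ∀ i : Fin n, 0 < L i i) : 0 < L.det := by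
  rw [Matrix.det_of_isLowerTriangular L (fun i j h => hLtri i j h)]
  exact Finset.prod_pos fun i _ => hLdiag i

theorem Kop_eq {n : ℕ} (J : EE n → ℝ) (CJ M : ℝ) (hM : 0 < M) (hCJ : 0 < CJ)
    (A L : EE n → Matrix (Fin n) (Fin n) ℝ)
    (b : EE n → Fin n → ℝ) {ε : ℝ} (hε : 0 < ε) (u : EE n → ℝ) (x : EE n)
    (hA : A x = L x * (L x)ᵀ) (hL : 0 < (L x).det) :
    Kop J CJ M A L b ε u x = 2 / (CJ * M * ε ^ 2) *
      ∫ z, J z * (atil M (-(ε • mvec (Emat M A b x) (mvec (L x) z)))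
        * (u (x - ε • mvec (L x) z) - u x)) := by
  rw [Kop, aux_cov (L x) hL hε x]
  have hs : Real.sqrt (A x).det = (L x).det := by
    rw [hA, Matrix.det_mul, Matrix.det_transpose, Real.sqrt_mul_self hL.le]
  have e : ∀ z, Kker J CJ M A L b ε x (x - ε • mvec (L x) z) *
      (u (x - ε • mvec (L x) z) - u x) = 2 / (CJ * M * (L x).det) / ε ^ (n + 2) *
      (J z * (atil M (-(ε • mvec (Emat M A b x) (mvec (L x) z)))
        * (u (x - ε • mvec (L x) z) - u x))) := by
    intro z
    have hz : ε⁻¹ • mvec (L x)⁻¹ (ε • mvec (L x) z) = z := by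
      have : mvec (L x)⁻¹ (ε • mvec (L x) z) = ε • mvec (L x)⁻¹ (mvec (L x) z) := by
        simp only [mvec, map_smul]
      rw [this, smul_smul, inv_mul_cancel₀ hε.ne', one_smul, ← mvec_mul,
        Matrix.nonsing_inv_mul _ hL.ne'.isUnit]
      simp [mvec]
    have hz2 : mvec (Emat M A b x) (ε • mvec (L x) z)
        = ε • mvec (Emat M A b x) (mvec (L x) z) := by
      simp only [mvec, map_smul]
    rw [Kker, sub_sub_cancel, hz, hs, hz2]
    ring
  simp only [e]
  rw [integral_const_mul, ← mul_assoc]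
  congr 1
  rw [pow_add]
  field_simp

theorem norm_mvec_sq {n : ℕ} (L : Matrix (Fin n) (Fin n) ℝ) (z : EE n) :
    ‖mvec L z‖ ^ 2 ≤ (∑ i, (L * Lᵀ) i i) * ‖z‖ ^ 2 := by
  rw [EuclideanSpace.real_norm_sq_eq, EuclideanSpace.real_norm_sq_eq, Finset.sum_mul]
  refine Finset.sum_le_sum fun i _ => ?_
  have := Finset.sum_mul_sq_le_sq_mul_sq Finset.univ (fun j => L i j) (fun j => z j)
  simpa [mvec, Matrix.toLpLin_apply, Matrix.mulVec, dotProduct, Matrix.mul_apply, sq] using this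

theorem aux_cons {n : ℕ} 
    (J : EE n → ℝ) (hJint : Integrable J)
    (hJcs : HasCompactSupport J) (hJ0 : ∀ x, 0 ≤ J x) (hJeven : ∀ x, J (-x) = J x)
    (CJ : ℝ) (hCJ : 0 < CJ)
    (hJmom : ∀ i j : Fin n, ∫ x, J x * (x i * x j) = if i = j then CJ else 0)
    (α : ℝ) (hα : α ∈ Ioc (0:ℝ) 1) (H : ℝ) (hH : 0 ≤ H)
    (A : EE n → Matrix (Fin n) (Fin n) ℝ)
    (L : EE n → Matrix (Fin n) (Fin n) ℝ)
    (b : EE n → Fin n → ℝ)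
    (M : ℝ) (hM : 0 < M) (ε : ℝ) (hε : 0 < ε) (x : EE n)
    (hA : A x = L x * (L x)ᵀ) (hL : 0 < (L x).det)
    (hbeta : ∀ z ∈ tsupport J, 
      0 ≤ atil M (-(ε • mvec (Emat M A b x) (mvec (L x) z))))
    (ρ : ℝ) (hρ0 : 0 ≤ ρ) (hρ : ∀ z ∈ tsupport J, ‖mvec (L x) z‖ ≤ ρ)
    (f : EE n → ℝ) (hf : ContDiff ℝ 2 f)
    (hHol : ∀ x y, ∀ i j : Fin n, |pd2 f x i j - pd2 f y i j| ≤ H * ‖x - y‖ ^ α) :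
    |Kop J CJ M A L b ε f x - Kloc A b f x| ≤
      (2 / CJ * (∫ z, J z) * (n ^ 2 * H * (ρ ^ 2 * ρ ^ α))) * ε ^ α := by
  set S : EE n → ℝ := fun z => ∑ k, mvec (Emat M A b x * L x) z k with hS
  have hat : ∀ z, atil M (-(ε • mvec (Emat M A b x) (mvec (L x) z))) = M - ε * S z := by
    intro z
    simp [atil, hS, mvec_mul, Finset.mul_sum]
    ring
  set D1 : EE n → ℝ := fun z => fderiv ℝ f x (mvec (L x) z) with hD1
  set D2 : EE n → ℝ := fun z => fderiv ℝ (fderiv ℝ f) x (mvec (L x) z) (mvec (L x) z) with hD2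
  have hexp (h : EE n) : h = ∑ i, h i • EuclideanSpace.single i (1:ℝ) := by
      ext k; simp [Finset.sum_apply, Pi.single_apply]
  have hD1e : ∀ z, D1 z = ∑ i, mvec (L x) z i * pd1 f x i := by
    intro z
    simp only [hD1]
    conv_lhs => rw [hexp (mvec (L x) z)]
    simp [pd1]
  have hD2e : ∀ z, D2 z = ∑ i, ∑ j, pd2 f x i j * (mvec (L x) z i * mvec (L x) z j) := by
    intro z
    simp only [hD2]
    conv_lhs => rw [hexp (mvec (L x) z)]
    simp [pd2, Finset.mul_sum]
    rw [Finset.sum_comm]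
    refine Finset.sum_congr rfl fun i _ => Finset.sum_congr rfl fun j _ => ?_
    ring
  have hmc : ∀ P : Matrix (Fin n) (Fin n) ℝ, ∀ i, Continuous fun z => mvec P z i := fun P i => by
    have := mvec_continuous P
    fun_prop
  have hSc : Continuous S := by
    simp only [hS]; exact continuous_finsetSum _ fun k _ => hmc _ _
  have hD1c : Continuous D1 := (fderiv ℝ f x).continuous.comp (mvec_continuous _)
  have hD2c : Continuous D2 := by
    have := mvec_continuous (L x)
    simp only [hD2]; fun_prop
  have hneg : ∀ P : Matrix (Fin n) (Fin n) ℝ, ∀ z, mvec P (-z) = - mvec P z := fun P z => by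
    simp only [mvec, map_neg]
  have hSn : ∀ z, S (-z) = - S z := fun z => by simp [hS, hneg]
  have hD1n : ∀ z, D1 (-z) = - D1 z := fun z => by simp [hD1, hneg]
  have hD2n : ∀ z, D2 (-z) = D2 z := fun z => by simp [hD2, hneg]
  set R : EE n → ℝ := fun z => f (x - ε • mvec (L x) z) - f x + ε * D1 z - ε ^ 2 / 2 * D2 z with hR
  have hRc : Continuous R := by
    have := mvec_continuous (L x)
    have := hf.continuous
    simp only [hR]; fun_prop
  set B := n ^ 2 * H * (ρ ^ 2 * ρ ^ α) * (ε ^ 2 * ε ^ α) with hB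
  have hRb : ∀ z ∈ tsupport J, |R z| ≤ B := by
    intro z hz
    have h := aux_taylor hf hα.1 hH hHol x (-(ε • mvec (L x) z))
    have e : R z = f (x + -(ε • mvec (L x) z)) - f x - fderiv ℝ f x (-(ε • mvec (L x) z))
       - 1/2 * fderiv ℝ (fderiv ℝ f) x (-(ε • mvec (L x) z)) (-(ε • mvec (L x) z)) := by
      simp [hR, hD1, hD2, sub_eq_add_neg]; ring
    rw [e]
    refine h.trans ?_
    have hn : ‖-(ε • mvec (L x) z)‖ ≤ ε * ρ := by
      rw [norm_neg, norm_smul, Real.norm_eq_abs, abs_of_pos hε]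
      exact mul_le_mul_of_nonneg_left (hρ z hz) hε.le
    have h3 : ‖-(ε • mvec (L x) z)‖ ^ α ≤ (ε * ρ) ^ α :=
      Real.rpow_le_rpow (norm_nonneg _) hn hα.1.le
    calc _ ≤ n ^ 2 * H * ((ε * ρ) ^ 2 * (ε * ρ) ^ α) := by gcongr
      _ = B := by rw [Real.mul_rpow hε.le hρ0, hB]; ring
  -- the moments
  have m1 : ∫ z, J z * (S z * D1 z) = CJ * (M / 2) * ∑ i, b x i * pd1 f x i := by
    have e : ∀ z, J z * (S z * D1 z) = ∑ k, ∑ i, pd1 f x i *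
        (J z * (mvec (Emat M A b x * L x) z k * mvec (L x) z i)) := by
      intro z
      rw [hD1e, hS, Finset.sum_mul_sum, Finset.mul_sum]
      refine Finset.sum_congr rfl fun k _ => ?_
      rw [Finset.mul_sum]
      exact Finset.sum_congr rfl fun i _ => by ring
    have hi : ∀ k i : Fin n, Integrable (fun z : EE n => pd1 f x i *
        (J z * (mvec (Emat M A b x * L x) z k * mvec (L x) z i))) :=
      fun k i => (aux_int hJint hJcs ((hmc _ _).mul (hmc _ _))).const_mul _
    simp only [e]
    rw [integral_finsetSum _ fun k _ => integrable_finsetSum _ fun l _ => hi k l]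
    simp_rw [fun k => integral_finsetSum _ fun l (_ : l ∈ Finset.univ) => hi k l,
      integral_const_mul, aux_mom hJint hJcs hJmom]
    have hdA : IsUnit (A x).det := by
      rw [hA, Matrix.det_mul, Matrix.det_transpose]
      exact (mul_pos hL hL).ne'.isUnit
    rw [Matrix.mul_assoc, ← hA, Emat, Matrix.smul_mul, Matrix.mul_assoc,
      Matrix.nonsing_inv_mul _ hdA, Matrix.mul_one]
    simp only [Matrix.smul_apply, Matrix.diagonal_apply, smul_eq_mul, mul_ite, mul_zero,
      Finset.sum_ite_eq, Finset.mem_univ, if_true, Finset.mul_sum]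
    exact Finset.sum_congr rfl fun i _ => by ring
  have m2 : ∫ z, J z * D2 z = CJ * ∑ i, ∑ j, A x i j * pd2 f x i j := by
    have e : ∀ z, J z * D2 z = ∑ i, ∑ j, pd2 f x i j *
        (J z * (mvec (L x) z i * mvec (L x) z j)) := by
      intro z
      rw [hD2e, Finset.mul_sum]
      refine Finset.sum_congr rfl fun k _ => ?_
      rw [Finset.mul_sum]
      exact Finset.sum_congr rfl fun i _ => by ring
    have hi : ∀ i j : Fin n, Integrable (fun z : EE n => pd2 f x i j *
        (J z * (mvec (L x) z i * mvec (L x) z j))) :=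
      fun k i => (aux_int hJint hJcs ((hmc _ _).mul (hmc _ _))).const_mul _
    simp only [e]
    rw [integral_finsetSum _ fun k _ => integrable_finsetSum _ fun l _ => hi k l]
    simp_rw [fun k => integral_finsetSum _ fun l (_ : l ∈ Finset.univ) => hi k l,
      integral_const_mul, aux_mom hJint hJcs hJmom]
    rw [← hA]
    simp only [Finset.mul_sum]
    exact Finset.sum_congr rfl fun i _ => Finset.sum_congr rfl fun j _ => by ring
  have o1 : ∫ z, J z * D1 z = 0 := aux_odd fun z => by rw [hJeven, hD1n]; ring
  have o2 : ∫ z, J z * (S z * D2 z) = 0 := aux_odd fun z => by rw [hJeven, hSn, hD2n]; ring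
  have o3 : ∫ z, J z * S z = 0 := aux_odd fun z => by rw [hJeven, hSn]; ring
  have i1 := aux_int hJint hJcs hD1c
  have i2 := aux_int hJint hJcs hD2c
  have i3 : Integrable (fun z => J z * (S z * D1 z)) := aux_int hJint hJcs (hSc.mul hD1c)
  have i4 : Integrable (fun z => J z * (S z * D2 z)) := aux_int hJint hJcs (hSc.mul hD2c)
  have i5 := aux_int hJint hJcs hSc
  have i6 : Integrable (fun z => J z * ((M - ε * S z) * R z)) :=
    aux_int hJint hJcs (by fun_prop)
  have hrem : |∫ z, J z * ((M - ε * S z) * R z)| ≤ M * (∫ z, J z) * B := by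
    have e : M * (∫ z, J z) * B = ∫ z, (M * B) * J z - (ε * B) * (J z * S z) := by
      rw [integral_sub (hJint.const_mul _) (i5.const_mul _), integral_const_mul,
        integral_const_mul, o3]
      ring
    rw [e]
    rw [← Real.norm_eq_abs]
    refine (norm_integral_le_integral_norm _).trans ?_
    refine integral_mono i6.norm ((hJint.const_mul _).sub (i5.const_mul _)) fun z => ?_
    by_cases hz : z ∈ tsupport J
    · have h1 := hbeta z hz
      rw [hat] at h1
      have h2 := hRb z hz
      simp only [Real.norm_eq_abs, abs_mul, abs_of_nonneg (hJ0 z), abs_of_nonneg h1]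
      calc _ ≤ J z * ((M - ε * S z) * B) :=
            mul_le_mul_of_nonneg_left (mul_le_mul_of_nonneg_left h2 h1) (hJ0 z)
        _ = _ := by ring
    · simp [image_eq_zero_of_notMem_tsupport hz]
  have key : ∫ z, J z * (atil M (-(ε • mvec (Emat M A b x) (mvec (L x) z)))
        * (f (x - ε • mvec (L x) z) - f x)) = CJ * M * ε ^ 2 / 2 * Kloc A b f x
        + ∫ z, J z * ((M - ε * S z) * R z) := by
    have e : ∀ z, J z * (atil M (-(ε • mvec (Emat M A b x) (mvec (L x) z)))
        * (f (x - ε • mvec (L x) z) - f x)) =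
        ((((-(ε * M)) * (J z * D1 z) + (M * ε ^ 2 / 2) * (J z * D2 z))
        + (ε ^ 2) * (J z * (S z * D1 z))) + (-(ε ^ 3 / 2)) * (J z * (S z * D2 z)))
        + J z * ((M - ε * S z) * R z) := by
      intro z
      rw [hat]; simp only [hR]; ring
    simp only [e]
    have j1 : Integrable (fun z => (-(ε * M)) * (J z * D1 z)) := i1.const_mul _
    have j2 : Integrable (fun z => (M * ε ^ 2 / 2) * (J z * D2 z)) := i2.const_mul _
    have j3 : Integrable (fun z => (ε ^ 2) * (J z * (S z * D1 z))) := i3.const_mul _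
    have j4 : Integrable (fun z => (-(ε ^ 3 / 2)) * (J z * (S z * D2 z))) := i4.const_mul _
    have j12 : Integrable (fun z => (-(ε * M)) * (J z * D1 z)
      + (M * ε ^ 2 / 2) * (J z * D2 z)) := j1.add j2
    have j123 : Integrable (fun z => (-(ε * M)) * (J z * D1 z)
      + (M * ε ^ 2 / 2) * (J z * D2 z) + (ε ^ 2) * (J z * (S z * D1 z))) := j12.add j3
    have j1234 : Integrable (fun z => (-(ε * M)) * (J z * D1 z)
      + (M * ε ^ 2 / 2) * (J z * D2 z) + (ε ^ 2) * (J z * (S z * D1 z))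
      + (-(ε ^ 3 / 2)) * (J z * (S z * D2 z))) := j123.add j4
    rw [integral_add j1234 i6, integral_add j123 j4, integral_add j12 j3, integral_add j1 j2]
    simp only [integral_const_mul]
    rw [o1, m2, m1, o2, Kloc]
    ring
  rw [Kop_eq J CJ M hM hCJ A L b hε f x hA hL, key]
  have e2 : 2 / (CJ * M * ε ^ 2) * (CJ * M * ε ^ 2 / 2 * Kloc A b f x
        + ∫ z, J z * ((M - ε * S z) * R z)) - Kloc A b f x
      = 2 / (CJ * M * ε ^ 2) * ∫ z, J z * ((M - ε * S z) * R z) := by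
    field_simp
    ring
  rw [e2, abs_mul, abs_of_nonneg (by positivity)]
  calc _ ≤ 2 / (CJ * M * ε ^ 2) * (M * (∫ z, J z) * B) := by gcongr
    _ = _ := by rw [hB]; field_simp

theorem aux_int2 {n : ℕ} (J : EE n → ℝ) (hJint : Integrable J)
    (hJcs : HasCompactSupport J) (M : ℝ) (E P : Matrix (Fin n) (Fin n) ℝ) (ε : ℝ) (x : EE n)
    (u : EE n → ℝ) (hu : Measurable u) (hub : ∃ C, ∀ y, |u y| ≤ C) :
    Integrable (fun z => J z * (atil M (-(ε • mvec E (mvec P z)))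
        * (u (x - ε • mvec P z) - u x))) := by
  obtain ⟨C, hC⟩ := hub
  have c1 := mvec_continuous P
  have c2 := mvec_continuous E
  have h1 : Integrable (fun z => J z * atil M (-(ε • mvec E (mvec P z)))) := by
    refine aux_int hJint hJcs ?_
    unfold atil
    fun_prop
  have hm : Measurable (fun z : EE n => u (x - ε • mvec P z) - u x) := by
    have : Measurable (fun z : EE n => x - ε • mvec P z) :=
      Continuous.measurable (by fun_prop)
    exact (hu.comp this).sub_const _
  have h2 := h1.mul_bdd (c := C + C) hm.aestronglyMeasurable
    (Filter.Eventually.of_forall fun z => by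
      refine (norm_sub_le _ _).trans (add_le_add (hC _) (hC _)))
  refine h2.congr (Filter.Eventually.of_forall fun z => ?_)
  simp only [mul_assoc]

theorem Kop_mono {n : ℕ} (J : EE n → ℝ) (hJint : Integrable J)
    (hJcs : HasCompactSupport J) (hJ0 : ∀ x, 0 ≤ J x)
    (CJ : ℝ) (hCJ : 0 < CJ) (A L : EE n → Matrix (Fin n) (Fin n) ℝ)
    (b : EE n → Fin n → ℝ)
    (M : ℝ) (hM : 0 < M) (ε : ℝ) (hε : 0 < ε) (x : EE n)
    (hA : A x = L x * (L x)ᵀ) (hL : 0 < (L x).det)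
    (hbeta : ∀ z ∈ tsupport J,
      0 ≤ atil M (-(ε • mvec (Emat M A b x) (mvec (L x) z))))
    (u v : EE n → ℝ) (hu : Measurable u) (hub : ∃ C, ∀ y, |u y| ≤ C)
    (hv : Measurable v) (hvb : ∃ C, ∀ y, |v y| ≤ C)
    (huv : ∀ y, u y - v y ≤ u x - v x) :
    Kop J CJ M A L b ε u x ≤ Kop J CJ M A L b ε v x := by
  rw [Kop_eq J CJ M hM hCJ A L b hε u x hA hL, Kop_eq J CJ M hM hCJ A L b hε v x hA hL]
  refine mul_le_mul_of_nonneg_left ?_ (by positivity)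
  refine integral_mono (aux_int2 J hJint hJcs M _ _ ε x u hu hub)
    (aux_int2 J hJint hJcs M _ _ ε x v hv hvb) fun z => ?_
  by_cases hz : z ∈ tsupport J
  · have := huv (x - ε • mvec (L x) z)
    exact mul_le_mul_of_nonneg_left (mul_le_mul_of_nonneg_left (by linarith) (hbeta z hz)) (hJ0 z)
  · simp [image_eq_zero_of_notMem_tsupport hz]

theorem aux_max {n : ℕ} (Ω : Set (EE n)) (hΩo : IsOpen Ω) (hΩb : Bornology.IsBounded Ω)
    (T : ℝ) (w d : EE n → ℝ → ℝ) (K : ℝ) (hK : 0 ≤ K)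
    (hc : ContinuousOn (fun p : EE n × ℝ => w p.1 p.2) (closure Ω ×ˢ Icc (0:ℝ) T))
    (hbc : ∀ x ∉ Ω, ∀ t ∈ Icc (0:ℝ) T, w x t = 0)
    (hic : ∀ x ∈ Ω, w x 0 = 0)
    (hd : ∀ x ∈ Ω, ∀ t ∈ Ioc (0:ℝ) T, HasDerivWithinAt (w x) (d x t) (Icc 0 T) t)
    (hmax : ∀ x ∈ Ω, ∀ t ∈ Ioc (0:ℝ) T, (∀ y, w y t ≤ w x t) → d x t ≤ K)
    (x : EE n) (hx : x ∈ Ω) (t : ℝ) (ht : t ∈ Icc (0:ℝ) T) : w x t ≤ K * t := by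
  have main : ∀ δ : ℝ, 0 < δ → w x t ≤ (K + δ) * t := by
    intro δ hδ
    have hcomp : IsCompact (closure Ω ×ˢ Icc (0:ℝ) T) := hΩb.isCompact_closure.prod isCompact_Icc
    have hc2 : ContinuousOn (fun p : EE n × ℝ => w p.1 p.2 - (K + δ) * p.2)
        (closure Ω ×ˢ Icc (0:ℝ) T) := hc.sub (by fun_prop)
    obtain ⟨⟨x0, t0⟩, ⟨hx0, ht0⟩, hm⟩ := hcomp.exists_isMaxOn ⟨(x, t), subset_closure hx, ht⟩ hc2
    have hm' : ∀ y ∈ closure Ω, ∀ s ∈ Icc (0:ℝ) T,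
        w y s - (K + δ) * s ≤ w x0 t0 - (K + δ) * t0 := fun y hy s hs => hm (a := (y, s)) ⟨hy, hs⟩
    simp only at hx0 ht0
    by_contra! hlt
    have hpos : 0 < w x0 t0 - (K + δ) * t0 :=
      lt_of_lt_of_le (by linarith) (hm' x (subset_closure hx) t ht)
    have hKt : 0 ≤ (K + δ) * t0 := mul_nonneg (by linarith) ht0.1
    have hx0Ω : x0 ∈ Ω := by
      by_contra h
      rw [hbc x0 h t0 ht0] at hpos
      linarith
    have ht0pos : 0 < t0 := by
      rcases ht0.1.eq_or_lt with h | h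
      · rw [← h, hic x0 hx0Ω] at hpos
        simp at hpos
      · exact h
    have hdle := hmax x0 hx0Ω t0 ⟨ht0pos, ht0.2⟩ fun y => by
      by_cases hy : y ∈ Ω
      · linarith [hm' y (subset_closure hy) t0 ht0]
      · rw [hbc y hy t0 ht0]; linarith
    have hder := (hd x0 hx0Ω t0 ⟨ht0pos, ht0.2⟩).sub
      (((hasDerivAt_id t0).const_mul (K + δ)).hasDerivWithinAt (s := Icc 0 T))
    have hloc : IsLocalMaxOn (w x0 - fun s => (K + δ) * id s) (Icc 0 T) t0 :=
      Filter.eventually_of_mem self_mem_nhdsWithin fun s hs => hm' x0 hx0 s hs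
    have := hloc.hasFDerivWithinAt_nonpos hder.hasFDerivWithinAt (y := 0 - t0)
      (sub_mem_posTangentConeAt_of_segment_subset
        ((convex_Icc 0 T).segment_subset ht0 ⟨le_refl _, ht0.1.trans ht0.2⟩))
    simp at this
    nlinarith
  by_contra! hlt
  have h0 : 0 ≤ t := ht.1
  have := main ((w x t - K * t) / (2 * (t + 1))) (by apply div_pos <;> linarith)
  have h3 : (w x t - K * t) / (2 * (t + 1)) * t ≤ (w x t - K * t) / 2 := by
    rw [div_mul_eq_mul_div, div_le_div_iff₀ (by linarith) (by norm_num)]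
    nlinarith
  nlinarith

/-- Solutions of the rescaled nonlocal Dirichlet problems `∂ₜu^ε = 𝒦_ε u^ε` uniformly
approximate, at rate `ε^α`, the solution of the local Dirichlet problem
`∂ₜv = ∑ᵢⱼ aᵢⱼ∂ᵢ∂ⱼv + ∑ᵢ bᵢ∂ᵢv`. -/
theorem stmt9 (n : ℕ) (hn : 1 ≤ n)
    (J : EuclideanSpace ℝ (Fin n) → ℝ) (hJint : Integrable J)
    (hJcs : HasCompactSupport J) (hJ0 : ∀ x, 0 ≤ J x) (hJeven : ∀ x, J (-x) = J x)
    (CJ : ℝ) (hCJ : 0 < CJ)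
    (hJmom : ∀ i j : Fin n, ∫ x, J x * (x i * x j) = if i = j then CJ else 0)
    (α : ℝ) (hα : α ∈ Ioc (0:ℝ) 1) (H : ℝ) (hH : 0 ≤ H)
    (A : EuclideanSpace ℝ (Fin n) → Matrix (Fin n) (Fin n) ℝ)
    (hAsymm : ∀ x, (A x).IsSymm) (hApos : ∀ x, (A x).PosDef)
    (hAsmooth : ∀ i j : Fin n, ContDiff ℝ (⊤ : ℕ∞) (fun x => A x i j))
    (hAbdd : ∀ i j : Fin n, ∀ k : ℕ, ∃ C, ∀ x,
      ‖iteratedFDeriv ℝ k (fun y => A y i j) x‖ ≤ C)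
    (θ : ℝ) (hθ : 0 < θ)
    (hell : ∀ x, ∀ ξ : Fin n → ℝ, θ * ∑ i, ξ i ^ 2 ≤ ∑ i, ∑ j, A x i j * ξ i * ξ j)
    (L : EuclideanSpace ℝ (Fin n) → Matrix (Fin n) (Fin n) ℝ)
    (hChol : ∀ x, A x = L x * (L x)ᵀ)
    (hLtri : ∀ x, ∀ i j : Fin n, i < j → L x i j = 0)
    (hLdiag : ∀ x, ∀ i : Fin n, 0 < L x i i)
    (b : EuclideanSpace ℝ (Fin n) → Fin n → ℝ)
    (hbsmooth : ∀ i : Fin n, ContDiff ℝ (⊤ : ℕ∞) (fun x => b x i))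
    (hbbdd : ∃ C, ∀ x, ∀ i : Fin n, |b x i| ≤ C)
    (M : ℝ) (hM : 0 < M)
    (β : ℝ) (hβ : 0 < β)
    (hbeta : ∀ x, ∀ z ∈ tsupport J, ∀ ε ∈ Ioc (0:ℝ) 1,
      β ≤ atil M (-(ε • mvec (Emat M A b x) (mvec (L x) z))))
    (Ω : Set (EuclideanSpace ℝ (Fin n))) (hΩo : IsOpen Ω) (hΩb : Bornology.IsBounded Ω)
    (T : ℝ) (hT : 0 < T)
    (g : EuclideanSpace ℝ (Fin n) → ℝ → ℝ) (u₀ : EuclideanSpace ℝ (Fin n) → ℝ)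
    -- the solution ṽ of the local problem
    (v : EuclideanSpace ℝ (Fin n) → ℝ → ℝ)
    (hvbdd : ∃ C, ∀ x t, |v x t| ≤ C)
    (hvcont : Continuous (fun p : EuclideanSpace ℝ (Fin n) × ℝ => v p.1 p.2))
    (vt : EuclideanSpace ℝ (Fin n) → ℝ → ℝ)
    (hvt : ∀ x, ∀ t ∈ Icc (0:ℝ) T, HasDerivWithinAt (fun s => v x s) (vt x t) (Icc (0:ℝ) T) t)
    (hvtcont : ∀ x, ContinuousOn (vt x) (Icc (0:ℝ) T))
    (hvC2 : ∀ t ∈ Icc (0:ℝ) T, ContDiff ℝ 2 (fun x => v x t))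
    (hvder : ∃ C, ∀ t ∈ Icc (0:ℝ) T, ∀ x,
      ‖fderiv ℝ (fun y => v y t) x‖ ≤ C ∧ ‖fderiv ℝ (fderiv ℝ (fun y => v y t)) x‖ ≤ C)
    (hvHolder : ∀ t ∈ Icc (0:ℝ) T, ∀ x y, ∀ i j : Fin n,
      |pd2 (fun z => v z t) x i j - pd2 (fun z => v z t) y i j| ≤ H * ‖x - y‖ ^ α)
    (hveq : ∀ x ∈ Ω, ∀ t ∈ Ioc (0:ℝ) T, vt x t = Kloc A b (fun y => v y t) x)
    (hvbc : ∀ x ∉ Ω, ∀ t ∈ Icc (0:ℝ) T, v x t = g x t)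
    (hvic : ∀ x ∈ Ω, v x 0 = u₀ x)
    -- the solutions u^ε of the nonlocal problems
    (uε : ℝ → EuclideanSpace ℝ (Fin n) → ℝ → ℝ)
    (huεbdd : ∀ ε ∈ Ioc (0:ℝ) 1, ∃ C, ∀ x t, |uε ε x t| ≤ C)
    (huεcont : ∀ ε ∈ Ioc (0:ℝ) 1,
      ContinuousOn (fun p : EuclideanSpace ℝ (Fin n) × ℝ => uε ε p.1 p.2)
        (closure Ω ×ˢ Icc (0:ℝ) T))
    (huεeq : ∀ ε ∈ Ioc (0:ℝ) 1, ∀ x ∈ Ω, ∀ t ∈ Ioc (0:ℝ) T,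
      HasDerivWithinAt (fun s => uε ε x s)
        (Kop J CJ M A L b ε (fun y => uε ε y t) x) (Icc (0:ℝ) T) t)
    (huεbc : ∀ ε ∈ Ioc (0:ℝ) 1, ∀ x ∉ Ω, ∀ t ∈ Icc (0:ℝ) T, uε ε x t = g x t)
    (huεic : ∀ ε ∈ Ioc (0:ℝ) 1, ∀ x ∈ Ω, uε ε x 0 = u₀ x) :
    ∃ c : ℝ, ∀ ε ∈ Ioc (0:ℝ) 1, ∀ x ∈ Ω, ∀ t ∈ Icc (0:ℝ) T,
      |uε ε x t - v x t| ≤ c * ε ^ α := by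
  obtain ⟨R0, hR0⟩ := hJcs.isCompact.isBounded.exists_norm_le
  choose CA hCA using fun i j => hAbdd i j 0
  simp only [norm_iteratedFDeriv_zero, Real.norm_eq_abs] at hCA
  set D := ∑ i, CA i i with hD
  have htr : ∀ x, ∑ i, A x i i ≤ D := fun x =>
    Finset.sum_le_sum fun i _ => (le_abs_self _).trans (hCA i i x)
  have hD0 : 0 ≤ D := Finset.sum_nonneg fun i _ => (abs_nonneg _).trans (hCA i i 0)
  set ρ := Real.sqrt (D * R0 ^ 2) with hρdef
  have hρ : ∀ x, ∀ z ∈ tsupport J, ‖mvec (L x) z‖ ≤ ρ := by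
    intro x z hz
    apply Real.le_sqrt_of_sq_le
    refine (norm_mvec_sq (L x) z).trans ?_
    rw [← hChol x]
    have h1 := hR0 z hz
    have h2 : ‖z‖ ^ 2 ≤ R0 ^ 2 := by gcongr
    exact mul_le_mul (htr x) h2 (by positivity) hD0
  have hdet : ∀ x, 0 < (L x).det := fun x => det_pos_of_tri _ (hLtri x) (hLdiag x)
  set C0 := 2 / CJ * (∫ z, J z) * (n ^ 2 * H * (ρ ^ 2 * ρ ^ α)) with hC0
  have hJi : 0 ≤ ∫ z, J z := integral_nonneg hJ0
  have hC00 : 0 ≤ C0 := by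
    have : 0 ≤ ρ := Real.sqrt_nonneg _
    positivity
  refine ⟨C0 * T, fun ε hε x hx t ht => ?_⟩
  have hK0 : 0 ≤ C0 * ε ^ α := mul_nonneg hC00 (Real.rpow_nonneg hε.1.le _)
  have hb : ∀ x, ∀ z ∈ tsupport J,
      0 ≤ atil M (-(ε • mvec (Emat M A b x) (mvec (L x) z))) := fun x z hz =>
    hβ.le.trans (hbeta x z hz ε hε)
  have hcons : ∀ t ∈ Icc (0:ℝ) T, ∀ x, |Kop J CJ M A L b ε (fun y => v y t) x
      - Kloc A b (fun y => v y t) x| ≤ C0 * ε ^ α := fun t ht x =>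
    aux_cons J hJint hJcs hJ0 hJeven CJ hCJ hJmom α hα H hH A L b M hM ε hε.1 x (hChol x) (hdet x)
      (hb x) ρ (Real.sqrt_nonneg _) (hρ x) _ (hvC2 t ht) (hvHolder t ht)
  have hvm : ∀ t, Measurable fun y => v y t := fun t =>
    (hvcont.comp (by fun_prop : Continuous fun y => (y, t))).measurable
  have hum : ∀ t ∈ Icc (0:ℝ) T, Measurable fun y => uε ε y t := by
    intro t ht
    classical
    have h1 : ContinuousOn (fun y => uε ε y t) Ω :=
      (huεcont ε hε).comp (f := fun y => (y, t)) (by fun_prop) fun y hy => ⟨subset_closure hy, ht⟩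
    have h2 : ContinuousOn (fun y => v y t) Ωᶜ :=
      (hvcont.comp (by fun_prop : Continuous fun y => (y, t))).continuousOn
    have h3 := ContinuousOn.measurable_piecewise h1 h2 hΩo.measurableSet
    convert h3 using 1
    funext y
    by_cases hy : y ∈ Ω
    · simp [hy]
    · simp [hy, huεbc ε hε y hy t ht, hvbc y hy t ht]
  have hub : ∀ t, ∃ C, ∀ y, |uε ε y t| ≤ C := fun t => (huεbdd ε hε).imp fun C h y => h y t
  have hvb : ∀ t, ∃ C, ∀ y, |v y t| ≤ C := fun t => hvbdd.imp fun C h y => h y t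
  have hIoc : ∀ t ∈ Ioc (0:ℝ) T, t ∈ Icc (0:ℝ) T := fun t ht => ⟨ht.1.le, ht.2⟩
  have up := aux_max Ω hΩo hΩb T (fun x t => uε ε x t - v x t)
    (fun x t => Kop J CJ M A L b ε (fun y => uε ε y t) x - vt x t) (C0 * ε ^ α) hK0
    ((huεcont ε hε).sub hvcont.continuousOn)
    (fun x hx t ht => by simp [huεbc ε hε x hx t ht, hvbc x hx t ht])
    (fun x hx => by simp [huεic ε hε x hx, hvic x hx])
    (fun x hx t ht => (huεeq ε hε x hx t ht).sub (hvt x t (hIoc t ht)))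
    (fun x hx t ht hm => by
      have h1 := Kop_mono J hJint hJcs hJ0 CJ hCJ A L b M hM ε hε.1 x (hChol x) (hdet x) (hb x)
        (fun y => uε ε y t) (fun y => v y t) (hum t (hIoc t ht)) (hub t) (hvm t) (hvb t) hm
      have h2 := (abs_le.1 (hcons t (hIoc t ht) x)).2
      rw [hveq x hx t ht]
      linarith) x hx t ht
  have lo := aux_max Ω hΩo hΩb T (fun x t => v x t - uε ε x t)
    (fun x t => vt x t - Kop J CJ M A L b ε (fun y => uε ε y t) x) (C0 * ε ^ α) hK0
    (hvcont.continuousOn.sub (huεcont ε hε))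
    (fun x hx t ht => by simp [huεbc ε hε x hx t ht, hvbc x hx t ht])
    (fun x hx => by simp [huεic ε hε x hx, hvic x hx])
    (fun x hx t ht => (hvt x t (hIoc t ht)).sub (huεeq ε hε x hx t ht))
    (fun x hx t ht hm => by
      have h1 := Kop_mono J hJint hJcs hJ0 CJ hCJ A L b M hM ε hε.1 x (hChol x) (hdet x) (hb x)
        (fun y => v y t) (fun y => uε ε y t) (hvm t) (hvb t) (hum t (hIoc t ht)) (hub t) hm
      have h2 := (abs_le.1 (hcons t (hIoc t ht) x)).1
      rw [hveq x hx t ht]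
      linarith) x hx t ht
  have hfin : C0 * ε ^ α * t ≤ C0 * T * ε ^ α := by nlinarith [ht.2]
  exact abs_le.2 ⟨by linarith, by linarith⟩
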